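/- Fix positive reals p₋₁, p₀, p₁ and let P(1) = p₋₁ + p₀ + p₁. Let w_{n,k} denote the total weight of Motzkin walks of length n having exactly k returns to zero, and let b_n denote the total weight of bridges of length n with B(z) = Σ_{n≥0} b_n zⁿ. Then for all real z with 0 < z < 1/P(1) and all real u with 0 ≤ u ≤ 1, the double series converges and Σ_{n≥0} zⁿ (Σ_{k≥0} w_{n,k} u^k) = W(z)/(u + (1−u)·B(z)), where W(z) = 1/(1 − zP(1)). -/

import Mathlib

open scoped BigOperators Classical

/-- Value of a step encoded by `Fin 3`: `0 ↦ -1`, `1 ↦ 0`, `2 ↦ +1`. -/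
def stepVal (s : Fin 3) : ℤ := (s : ℤ) - 1

/-- Weight of a single step: `p₋₁` for `-1`, `p₀` for `0`, `p₁` for `+1`. -/
def stepWeight (pm p0 p1 : ℝ) (s : Fin 3) : ℝ :=
  if s = 0 then pm else if s = 1 then p0 else p1

/-- Weight of a Motzkin walk (product of its step weights). -/
def walkWeight (pm p0 p1 : ℝ) {n : ℕ} (w : Fin n → Fin 3) : ℝ :=
  ∏ i, stepWeight pm p0 p1 (w i)

/-- Partial sum `ω_j` of the walk `w`. -/
def psum {n : ℕ} (w : Fin n → Fin 3) (j : ℕ) : ℤ :=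
  ∑ i ∈ Finset.univ.filter (fun i : Fin n => (i : ℕ) < j), stepVal (w i)

/-- Total weight of Motzkin bridges of length `n`. -/
noncomputable def bridgeW (pm p0 p1 : ℝ) (n : ℕ) : ℝ :=
  ∑ w ∈ Finset.univ.filter (fun w : Fin n → Fin 3 => psum w n = 0),
    walkWeight pm p0 p1 w

/-- Number of returns to zero of a walk of length `n`. -/
def retZero {n : ℕ} (w : Fin n → Fin 3) : ℕ :=
  ((Finset.Icc 1 n).filter (fun j => psum w j = 0)).card

/-- Total weight of walks of length `n` with exactly `k` returns to zero. -/
noncomputable def walkRetW (pm p0 p1 : ℝ) (n k : ℕ) : ℝ :=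
  ∑ w ∈ Finset.univ.filter (fun w : Fin n → Fin 3 => retZero w = k),
    walkWeight pm p0 p1 w

/-- Number of sign changes of a walk of length `n`. -/
def signChanges {n : ℕ} (w : Fin n → Fin 3) : ℕ :=
  (((Finset.range (n+1)) ×ˢ (Finset.range (n+1))).filter
    (fun p => p.1 < p.2 ∧ psum w p.1 * psum w p.2 < 0 ∧
      ∀ l ∈ Finset.Ioo p.1 p.2, psum w l = 0)).card

/-- Total weight of bridges of length `n` with exactly `k` sign changes. -/
noncomputable def bridgeSignW (pm p0 p1 : ℝ) (n k : ℕ) : ℝ :=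
  ∑ w ∈ Finset.univ.filter
      (fun w : Fin n → Fin 3 => psum w n = 0 ∧ signChanges w = k),
    walkWeight pm p0 p1 w

/-- Total weight of positive excursions of length `n`. -/
noncomputable def posExcW (pm p0 p1 : ℝ) (n : ℕ) : ℝ :=
  ∑ w ∈ Finset.univ.filter
      (fun w : Fin n → Fin 3 => psum w n = 0 ∧ ∀ j ∈ Finset.range (n+1), 0 ≤ psum w j),
    walkWeight pm p0 p1 w

/-- Total weight of negative excursions of length `n`. -/
noncomputable def negExcW (pm p0 p1 : ℝ) (n : ℕ) : ℝ :=
  ∑ w ∈ Finset.univ.filter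
      (fun w : Fin n → Fin 3 => psum w n = 0 ∧ ∀ j ∈ Finset.range (n+1), psum w j ≤ 0),
    walkWeight pm p0 p1 w

/-- A positive bridge: a bridge whose last nonzero partial sum is positive. -/
def IsPosBridge {n : ℕ} (w : Fin n → Fin 3) : Prop :=
  psum w n = 0 ∧ ∃ j ∈ Finset.range (n+1),
    0 < psum w j ∧ ∀ l ∈ Finset.Ioc j n, psum w l = 0

/-- A negative bridge: a bridge whose last nonzero partial sum is negative. -/
def IsNegBridge {n : ℕ} (w : Fin n → Fin 3) : Prop :=
  psum w n = 0 ∧ ∃ j ∈ Finset.range (n+1),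
    psum w j < 0 ∧ ∀ l ∈ Finset.Ioc j n, psum w l = 0

instance {n : ℕ} (w : Fin n → Fin 3) : Decidable (IsPosBridge w) := by
  unfold IsPosBridge; infer_instance

instance {n : ℕ} (w : Fin n → Fin 3) : Decidable (IsNegBridge w) := by
  unfold IsNegBridge; infer_instance

/-- Total weight of positive bridges of length `n` with `k` sign changes. -/
noncomputable def posBridgeSignW (pm p0 p1 : ℝ) (n k : ℕ) : ℝ :=
  ∑ w ∈ Finset.univ.filter
      (fun w : Fin n → Fin 3 => IsPosBridge w ∧ signChanges w = k),
    walkWeight pm p0 p1 w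

/-- Total weight of negative bridges of length `n` with `k` sign changes. -/
noncomputable def negBridgeSignW (pm p0 p1 : ℝ) (n k : ℕ) : ℝ :=
  ∑ w ∈ Finset.univ.filter
      (fun w : Fin n → Fin 3 => IsNegBridge w ∧ signChanges w = k),
    walkWeight pm p0 p1 w

/-- Total weight of walks of length `n` with `k` sign changes. -/
noncomputable def walkSignW (pm p0 p1 : ℝ) (n k : ℕ) : ℝ :=
  ∑ w ∈ Finset.univ.filter (fun w : Fin n → Fin 3 => signChanges w = k),
    walkWeight pm p0 p1 w

/-- Height of a walk of length `n` (as a natural number; it is `max_j ω_j ≥ 0`). -/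
def height {n : ℕ} (w : Fin n → Fin 3) : ℕ :=
  (Finset.range (n+1)).sup (fun j => (psum w j).toNat)

/-- Total weight of walks of length `n` of height exactly `h`. -/
noncomputable def heightW (pm p0 p1 : ℝ) (n h : ℕ) : ℝ :=
  ∑ w ∈ Finset.univ.filter (fun w : Fin n → Fin 3 => height w = h),
    walkWeight pm p0 p1 w

/-! Cut a walk at a visit to zero: what precedes is a bridge, what follows is an arbitrary walk, and
the returns of the latter are the later returns of the whole walk. Marking each later return by `u`,
the visits to zero of a walk with `r` returns (time `0` included) contribute `1 + u + ⋯ + u ^ r`,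
which is `1 - u ^ (r + 1)` after multiplication by `1 - u`. Summing over walks gives
`(1 - u) B(z) W(z, u) = W(z) - u W(z, u)`. The denominator `u + (1 - u) B(z)` cannot vanish, because
its product with `W(z, u)` is `W(z) ≠ 0`. -/

section Summation

open Finset.HasAntidiagonal (antidiagonal mem_antidiagonal)

theorem sum_card_filter_lt {α M : Type*} [LinearOrder α] [AddCommMonoid M] (f : ℕ → M)
    (s : Finset α) :
    ∑ j ∈ s, f (s.filter (j < ·)).card = ∑ i ∈ Finset.range s.card, f i := by
  induction s using Finset.induction_on_min with
  | empty => simp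
  | insert a s ha ih =>
    have ha_notMem : a ∉ s := fun h => lt_irrefl a (ha a h)
    have filter_min : (insert a s).filter (a < ·) = s := by
      rw [Finset.filter_insert, if_neg (lt_irrefl a), Finset.filter_true_of_mem ha]
    have filter_other : ∀ j ∈ s, (insert a s).filter (j < ·) = s.filter (j < ·) := fun j hj => by
      rw [Finset.filter_insert, if_neg (ha j hj).not_gt]
    rw [Finset.sum_insert ha_notMem, filter_min, Finset.card_insert_of_notMem ha_notMem,
      Finset.sum_range_succ, add_comm, ← ih]
    exact congrArg (· + f s.card) (Finset.sum_congr rfl fun j hj => by rw [filter_other j hj])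

theorem hasSum_antidiagonal_mul_pow {R : Type*} [NormedCommRing R] [CompleteSpace R]
    {a b : ℕ → R} {z : R} (ha : Summable fun n => ‖a n * z ^ n‖)
    (hb : Summable fun n => ‖b n * z ^ n‖) :
    HasSum (fun n => (∑ p ∈ antidiagonal n, a p.1 * b p.2) * z ^ n)
      ((∑' n, a n * z ^ n) * ∑' n, b n * z ^ n) := by
  have coeff_eq (n : ℕ) : (∑ p ∈ antidiagonal n, a p.1 * b p.2) * z ^ n =
      ∑ p ∈ antidiagonal n, a p.1 * z ^ p.1 * (b p.2 * z ^ p.2) := by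
    rw [Finset.sum_mul]
    refine Finset.sum_congr rfl fun p hp => ?_
    rw [← mem_antidiagonal.1 hp]
    ring
  simp only [coeff_eq]
  rw [tsum_mul_tsum_eq_tsum_sum_antidiagonal_of_summable_norm ha hb]
  exact (summable_norm_sum_mul_antidiagonal_of_summable_norm ha hb).of_norm.hasSum

end Summation

section ZeroTimes

variable {n j m : ℕ}

theorem psum_zero (w : Fin n → Fin 3) : psum w 0 = 0 := by
  simp [psum]

theorem psum_append_left (a : Fin j → Fin 3) (b : Fin m → Fin 3) :
    psum (Fin.append a b) j = psum a j := by
  simp [psum, Finset.sum_filter, Fin.sum_univ_add]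

theorem psum_append_add (a : Fin j → Fin 3) (b : Fin m → Fin 3) (i : ℕ) :
    psum (Fin.append a b) (j + i) = psum a j + psum b i := by
  have lt_add (x : Fin j) : (x : ℕ) < j + i := by omega
  simp [psum, Finset.sum_filter, Fin.sum_univ_add, lt_add]

theorem retZero_le (w : Fin n → Fin 3) : retZero w ≤ n := by
  simpa only [retZero, Nat.card_Icc, Nat.add_sub_cancel] using
    (Finset.Icc 1 n).card_filter_le (fun j => psum w j = 0)

/-- The times in `{0, …, n}` at which a walk of length `n` is at zero. Unlike in `retZero`, the
starting time `0` is included. -/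
def zeroTimes (w : Fin n → Fin 3) : Finset ℕ :=
  (Finset.range (n + 1)).filter (fun j => psum w j = 0)

theorem card_zeroTimes (w : Fin n → Fin 3) : (zeroTimes w).card = retZero w + 1 := by
  have zeroTimes_eq : zeroTimes w = insert 0 ((Finset.Icc 1 n).filter (psum w · = 0)) := by
    rw [zeroTimes, Finset.range_eq_Ico, ← Finset.insert_Ico_add_one_left_eq_Ico n.succ_pos,
      Finset.filter_insert, if_pos (psum_zero w)]
    rfl
  rw [zeroTimes_eq, Finset.card_insert_of_notMem (by simp), retZero]

theorem card_filter_lt_zeroTimes_append {a : Fin j → Fin 3} (ha : psum a j = 0)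
    (b : Fin m → Fin 3) :
    ((zeroTimes (Fin.append a b)).filter (j < ·)).card = retZero b := by
  have later_eq_map : (zeroTimes (Fin.append a b)).filter (j < ·) =
      ((Finset.Icc 1 m).filter (psum b · = 0)).map (addLeftEmbedding j) := by
    ext i
    simp only [zeroTimes, Finset.mem_filter, Finset.mem_range, Finset.mem_map, Finset.mem_Icc,
      addLeftEmbedding_apply]
    constructor
    · rintro ⟨⟨hi, hzero⟩, hji⟩
      obtain ⟨k, rfl⟩ := Nat.exists_eq_add_of_le hji.le
      rw [psum_append_add, ha, zero_add] at hzero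
      exact ⟨k, ⟨⟨by omega, by omega⟩, hzero⟩, rfl⟩
    · rintro ⟨k, ⟨⟨hk, hkm⟩, hzero⟩, rfl⟩
      rw [psum_append_add, ha, hzero]
      exact ⟨⟨by omega, rfl⟩, by omega⟩
  rw [later_eq_map, Finset.card_map, retZero]

end ZeroTimes

section Weights

variable (pm p0 p1 : ℝ)

theorem walkWeight_append {j m : ℕ} (a : Fin j → Fin 3) (b : Fin m → Fin 3) :
    walkWeight pm p0 p1 (Fin.append a b) = walkWeight pm p0 p1 a * walkWeight pm p0 p1 b := by
  simp [walkWeight, Fin.prod_univ_add]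

theorem sum_walkWeight (n : ℕ) :
    ∑ w : Fin n → Fin 3, walkWeight pm p0 p1 w = (pm + p0 + p1) ^ n := by
  simp only [walkWeight]
  rw [← Fintype.sum_pow]
  simp [Fin.sum_univ_three, stepWeight]

theorem abs_walkWeight {n : ℕ} (w : Fin n → Fin 3) :
    |walkWeight pm p0 p1 w| = walkWeight |pm| |p0| |p1| w := by
  simp only [walkWeight, stepWeight, Finset.abs_prod, apply_ite abs]

theorem abs_bridgeW_le (n : ℕ) : |bridgeW pm p0 p1 n| ≤ (|pm| + |p0| + |p1|) ^ n := by
  simp only [← sum_walkWeight, ← abs_walkWeight]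
  exact (Finset.abs_sum_le_sum_abs _ _).trans
    (Finset.sum_le_univ_sum_of_nonneg fun w => abs_nonneg _)

theorem abs_walkRetW_le (n k : ℕ) :
    |walkRetW pm p0 p1 n k| ≤ walkRetW |pm| |p0| |p1| n k := by
  simp only [walkRetW, ← abs_walkWeight]
  exact Finset.abs_sum_le_sum_abs _ _

end Weights

section ReturnPoly

open Finset.HasAntidiagonal (antidiagonal mem_antidiagonal)

variable (pm p0 p1 : ℝ)

/-- The generating polynomial `∑ₖ w_{n,k} u ^ k` of returns to zero of walks of length `n`, as a
function of `u`, written as a sum over walks. -/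
noncomputable def returnPoly (n : ℕ) (u : ℝ) : ℝ :=
  ∑ w : Fin n → Fin 3, walkWeight pm p0 p1 w * u ^ retZero w

theorem hasSum_walkRetW_mul_pow (n : ℕ) (u : ℝ) :
    HasSum (fun k => walkRetW pm p0 p1 n k * u ^ k) (returnPoly pm p0 p1 n u) := by
  have term_eq (k : ℕ) : walkRetW pm p0 p1 n k * u ^ k = ∑ w : Fin n → Fin 3,
      if k = retZero w then walkWeight pm p0 p1 w * u ^ retZero w else 0 := by
    rw [walkRetW, Finset.sum_mul, ← Finset.sum_filter]
    refine Finset.sum_congr (by simp only [eq_comm]) fun w hw => ?_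
    rw [(Finset.mem_filter.1 hw).2]
  simp only [term_eq]
  exact hasSum_sum fun w _ => hasSum_ite_eq (retZero w) _

theorem returnPoly_abs_le (n : ℕ) (u : ℝ) :
    returnPoly |pm| |p0| |p1| n |u| ≤ (max 1 |u| * (|pm| + |p0| + |p1|)) ^ n := by
  rw [mul_pow, mul_comm, ← sum_walkWeight, Finset.sum_mul, returnPoly]
  refine Finset.sum_le_sum fun w _ => mul_le_mul_of_nonneg_left ?_ ?_
  · calc |u| ^ retZero w ≤ max 1 |u| ^ retZero w := by gcongr; exact le_max_right _ _
      _ ≤ max 1 |u| ^ n := pow_le_pow_right₀ (le_max_left _ _) (retZero_le w)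
  · rw [← abs_walkWeight]
    exact abs_nonneg _

theorem bridgeW_mul_returnPoly (j m : ℕ) (u : ℝ) :
    bridgeW pm p0 p1 j * returnPoly pm p0 p1 m u =
      ∑ w : Fin (j + m) → Fin 3 with psum w j = 0,
        walkWeight pm p0 p1 w * u ^ ((zeroTimes w).filter (j < ·)).card := by
  rw [bridgeW, returnPoly, Finset.sum_mul_sum, Finset.sum_filter, Finset.sum_filter,
    ← (Fin.appendEquiv j m).sum_comp, Fintype.sum_prod_type]
  refine Finset.sum_congr rfl fun a _ => ?_
  simp only [Fin.appendEquiv, Equiv.coe_fn_mk, psum_append_left]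
  split_ifs with ha
  · refine Finset.sum_congr rfl fun b _ => ?_
    rw [walkWeight_append, card_filter_lt_zeroTimes_append ha, mul_assoc]
  · exact Finset.sum_const_zero.symm

theorem sum_antidiagonal_bridgeW_mul_returnPoly (n : ℕ) (u : ℝ) :
    ∑ p ∈ antidiagonal n, bridgeW pm p0 p1 p.1 * returnPoly pm p0 p1 p.2 u =
      ∑ w : Fin n → Fin 3, walkWeight pm p0 p1 w * ∑ i ∈ Finset.range (retZero w + 1), u ^ i := by
  calc ∑ p ∈ antidiagonal n, bridgeW pm p0 p1 p.1 * returnPoly pm p0 p1 p.2 u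
    _ = ∑ p ∈ antidiagonal n, ∑ w : Fin n → Fin 3 with psum w p.1 = 0,
          walkWeight pm p0 p1 w * u ^ ((zeroTimes w).filter (p.1 < ·)).card := by
      refine Finset.sum_congr rfl fun p hp => ?_
      obtain rfl := mem_antidiagonal.1 hp
      exact bridgeW_mul_returnPoly pm p0 p1 p.1 p.2 u
    _ = ∑ j ∈ Finset.range (n + 1), ∑ w : Fin n → Fin 3 with psum w j = 0,
          walkWeight pm p0 p1 w * u ^ ((zeroTimes w).filter (j < ·)).card :=
      Finset.Nat.sum_antidiagonal_eq_sum_range_succ_mk _ n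
    _ = ∑ w : Fin n → Fin 3, ∑ j ∈ zeroTimes w,
          walkWeight pm p0 p1 w * u ^ ((zeroTimes w).filter (j < ·)).card :=
      Finset.sum_comm' fun j w => by simp [zeroTimes]
    _ = _ := by
      simp only [← Finset.mul_sum, sum_card_filter_lt (u ^ ·), card_zeroTimes]

theorem returnPoly_convolution (n : ℕ) (u : ℝ) :
    u * returnPoly pm p0 p1 n u +
      (1 - u) * ∑ p ∈ antidiagonal n, bridgeW pm p0 p1 p.1 * returnPoly pm p0 p1 p.2 u =
      (pm + p0 + p1) ^ n := by
  rw [sum_antidiagonal_bridgeW_mul_returnPoly, returnPoly, Finset.mul_sum, Finset.mul_sum,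
    ← Finset.sum_add_distrib, ← sum_walkWeight]
  refine Finset.sum_congr rfl fun w _ => ?_
  linear_combination walkWeight pm p0 p1 w * mul_neg_geom_sum u (retZero w + 1)

end ReturnPoly

section GeneratingFunctions

open Finset.HasAntidiagonal (antidiagonal)

variable {pm p0 p1 z u : ℝ}

theorem abs_mul_sum_abs_lt_one (h : |z| * (max 1 |u| * (|pm| + |p0| + |p1|)) < 1) :
    |z| * (|pm| + |p0| + |p1|) < 1 := by
  refine lt_of_le_of_lt ?_ h
  gcongr
  exact le_mul_of_one_le_left (by positivity) (le_max_left _ _)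

theorem abs_mul_sum_lt_one (h : |z| * (|pm| + |p0| + |p1|) < 1) :
    |z * (pm + p0 + p1)| < 1 := by
  refine lt_of_le_of_lt ?_ h
  rw [abs_mul]
  gcongr
  exact abs_add_three _ _ _

theorem summable_bridgeW_mul_pow (h : |z| * (|pm| + |p0| + |p1|) < 1) :
    Summable fun n => bridgeW pm p0 p1 n * z ^ n := by
  refine (summable_geometric_of_lt_one (by positivity) h).of_norm_bounded fun n => ?_
  rw [Real.norm_eq_abs, abs_mul, abs_pow, mul_pow, mul_comm]
  gcongr
  exact abs_bridgeW_le pm p0 p1 n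

theorem summable_returnPoly_abs_mul_pow (h : |z| * (max 1 |u| * (|pm| + |p0| + |p1|)) < 1) :
    Summable fun n => returnPoly |pm| |p0| |p1| n |u| * |z| ^ n := by
  have returnPoly_nonneg (n : ℕ) : 0 ≤ returnPoly |pm| |p0| |p1| n |u| :=
    Finset.sum_nonneg fun w _ => by rw [← abs_walkWeight]; positivity
  refine (summable_geometric_of_lt_one (by positivity) h).of_nonneg_of_le
    (fun n => mul_nonneg (returnPoly_nonneg n) (by positivity)) fun n => ?_
  rw [mul_pow, mul_comm]
  gcongr
  exact returnPoly_abs_le pm p0 p1 n u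

theorem summable_walkRetW_mul_pow_mul_pow (h : |z| * (max 1 |u| * (|pm| + |p0| + |p1|)) < 1) :
    Summable fun p : ℕ × ℕ => walkRetW pm p0 p1 p.1 p.2 * z ^ p.1 * u ^ p.2 := by
  have walkRetW_abs_nonneg (n k : ℕ) : 0 ≤ walkRetW |pm| |p0| |p1| n k :=
    (abs_nonneg _).trans (abs_walkRetW_le pm p0 p1 n k)
  have row (n : ℕ) : HasSum (fun k => walkRetW |pm| |p0| |p1| n k * |z| ^ n * |u| ^ k)
      (returnPoly |pm| |p0| |p1| n |u| * |z| ^ n) := by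
    simpa only [mul_right_comm] using
      (hasSum_walkRetW_mul_pow |pm| |p0| |p1| n |u|).mul_right (|z| ^ n)
  have majorant : Summable fun p : ℕ × ℕ =>
      walkRetW |pm| |p0| |p1| p.1 p.2 * |z| ^ p.1 * |u| ^ p.2 := by
    refine (summable_prod_of_nonneg fun p => ?_).2 ⟨fun n => (row n).summable, ?_⟩
    · have := walkRetW_abs_nonneg p.1 p.2
      positivity
    · simpa only [fun n => (row n).tsum_eq] using summable_returnPoly_abs_mul_pow h
  refine majorant.of_norm_bounded fun p => ?_
  rw [Real.norm_eq_abs, abs_mul, abs_mul, abs_pow, abs_pow]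
  gcongr
  exact abs_walkRetW_le pm p0 p1 p.1 p.2

theorem tsum_walkRetW_mul_pow_mul_pow (n : ℕ) :
    ∑' k, walkRetW pm p0 p1 n k * z ^ n * u ^ k = returnPoly pm p0 p1 n u * z ^ n := by
  simp only [mul_right_comm _ (z ^ n), tsum_mul_right, (hasSum_walkRetW_mul_pow ..).tsum_eq]

theorem mul_tsum_returnPoly_mul_pow (h : |z| * (max 1 |u| * (|pm| + |p0| + |p1|)) < 1) :
    (u + (1 - u) * ∑' n, bridgeW pm p0 p1 n * z ^ n) * ∑' n, returnPoly pm p0 p1 n u * z ^ n =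
      (1 - z * (pm + p0 + p1))⁻¹ := by
  have bridges : Summable fun n => bridgeW pm p0 p1 n * z ^ n :=
    summable_bridgeW_mul_pow (abs_mul_sum_abs_lt_one h)
  have walks : Summable fun n => returnPoly pm p0 p1 n u * z ^ n := by
    simpa only [tsum_walkRetW_mul_pow_mul_pow] using (summable_walkRetW_mul_pow_mul_pow h).prod
  have convolution := hasSum_antidiagonal_mul_pow bridges.norm walks.norm
  have coeff_eq (n : ℕ) : u * (returnPoly pm p0 p1 n u * z ^ n) + (1 - u) *
      ((∑ p ∈ antidiagonal n, bridgeW pm p0 p1 p.1 * returnPoly pm p0 p1 p.2 u) * z ^ n) =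
      (z * (pm + p0 + p1)) ^ n := by
    rw [mul_pow, ← returnPoly_convolution pm p0 p1 n u]
    ring
  have powers := (walks.hasSum.mul_left u).add (convolution.mul_left (1 - u))
  simp only [coeff_eq] at powers
  rw [add_mul, mul_assoc (1 - u)]
  exact powers.unique
    (hasSum_geometric_of_abs_lt_one (abs_mul_sum_lt_one (abs_mul_sum_abs_lt_one h)))

end GeneratingFunctions

theorem returns_to_zero_gf_general (pm p0 p1 z u : ℝ)
    (h : |z| * (max 1 |u| * (|pm| + |p0| + |p1|)) < 1) :
    Summable (fun p : ℕ × ℕ => walkRetW pm p0 p1 p.1 p.2 * z ^ p.1 * u ^ p.2) ∧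
      (∑' n : ℕ, z ^ n * ∑' k : ℕ, walkRetW pm p0 p1 n k * u ^ k) =
        1 / (1 - z * (pm + p0 + p1)) /
          (u + (1 - u) * ∑' n : ℕ, bridgeW pm p0 p1 n * z ^ n) := by
  have product_eq := mul_tsum_returnPoly_mul_pow h
  have walks_ne_zero : 1 - z * (pm + p0 + p1) ≠ 0 :=
    (sub_pos.2 (abs_lt.1 (abs_mul_sum_lt_one (abs_mul_sum_abs_lt_one h))).2).ne'
  have denominator_ne_zero : u + (1 - u) * ∑' n, bridgeW pm p0 p1 n * z ^ n ≠ 0 :=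
    left_ne_zero_of_mul (product_eq ▸ inv_ne_zero walks_ne_zero)
  refine ⟨summable_walkRetW_mul_pow_mul_pow h, ?_⟩
  rw [eq_div_iff denominator_ne_zero, one_div, ← product_eq, mul_comm]
  simp only [(hasSum_walkRetW_mul_pow ..).tsum_eq, mul_comm]

/-- **Bivariate generating function for returns to zero of Motzkin walks**:
`W(z,u) = W(z)/(u + (1-u)B(z))`. -/
theorem returns_to_zero_gf (pm p0 p1 : ℝ)
    (hpm : 0 < pm) (hp0 : 0 < p0) (hp1 : 0 < p1) :
    let P1 : ℝ := pm + p0 + p1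
    let B : ℝ → ℝ := fun z => ∑' n : ℕ, bridgeW pm p0 p1 n * z ^ n
    let W : ℝ → ℝ := fun z => 1 / (1 - z * P1)
    ∀ z : ℝ, 0 < z → z < 1 / P1 → ∀ u : ℝ, 0 ≤ u → u ≤ 1 →
      Summable (fun p : ℕ × ℕ => walkRetW pm p0 p1 p.1 p.2 * z ^ p.1 * u ^ p.2) ∧
      (∑' n : ℕ, z ^ n * ∑' k : ℕ, walkRetW pm p0 p1 n k * u ^ k) =
        W z / (u + (1 - u) * B z) := by
  intro P1 _ _ z hz hzP u hu0 hu1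
  refine returns_to_zero_gf_general pm p0 p1 z u ?_
  simpa only [abs_of_pos hz, abs_of_nonneg hu0, max_eq_left hu1, one_mul, abs_of_pos hpm,
    abs_of_pos hp0, abs_of_pos hp1] using (lt_div_iff₀ (by positivity)).1 hzP
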